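/- Let G be a finite group with conjugacy classes labeled α and irreducible characters χ_j with dimensions d_j. Then Σ_{x∈α} Σ_{y∈β} [xy ∈ γ̂] · |G| / √(h_α h_β h_γ) = Σ_j χ_j(C_α) χ_j(C_β) χ_j(C_γ) / d_j, i.e. the three-point function N_{αβγ} of the lattice TFT for R = ℂ[G] equals the character-sum expression Σ_j χ_j(C_α)χ_j(C_β)χ_j(C_γ)/d_j. -/

import Mathlib

open FDRep CategoryTheory

noncomputable section

/-- linear extension of the character to the normalized class sum:
`χ_V(C_α) = (1/√h_α) ∑_{x∈α} χ_V(x)` -/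
def chC {G : Type} [Group G] [Fintype G] (V : FDRep ℂ G) (α : ConjClasses G) : ℂ :=
  ((Real.sqrt (Nat.card α.carrier) : ℂ))⁻¹ *
    ∑ x ∈ (Set.toFinite α.carrier).toFinset, V.character x

/-!
By Schur's lemma a central element `z` of `k[G]` acts on a simple representation with character `χ`
and dimension `d` as the scalar `χ(z) / d`. Orthogonality of characters then shows that `|G| • 1`
and `∑ i, d i • (∑ g, χ i (g⁻¹) • g)` act equally on every simple representation, so they agree
because `k[G]` is semisimple. Multiplying by `a` and reading off the coefficient of `1` gives
`|G| * a(1) = ∑ i, d i * χ i (a)`. If `a` is the product of three class sums, `a(1)` counts the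
pairs `(x, y)`, while `d i ^ 2 * χ i (a)` is the product of the values of `χ i` on the class sums.
-/

universe u v

namespace FrobeniusFormula

open MonoidAlgebra

section Faithfulness

variable {k : Type u} [Field k]

theorem simple_of_isIrreducible {G : Type v} [Monoid G] {V : Type u} [AddCommGroup V] [Module k V]
    [FiniteDimensional k V] (ρ : Representation k G V) [ρ.IsIrreducible] :
    Simple (FDRep.of ρ) where
  mono_isIso_iff_nonzero {Y} f _ := by
    constructor
    · rintro _ rfl
      obtain ⟨v, v_ne_zero⟩ : ∃ v : ρ.asModule, v ≠ 0 :=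
        @exists_ne _ (IsSimpleModule.nontrivial k[G] ρ.asModule) 0
      exact v_ne_zero congr(($(IsIso.inv_hom_id (0 : Y ⟶ FDRep.of ρ))).hom.hom.hom v).symm
    · intro f_ne_zero
      let F : Representation.IntertwiningMap Y.ρ ρ :=
        ⟨f.hom.hom.hom, fun g ↦ congr($(f.comm g).hom.hom)⟩
      have F_ne_zero : F ≠ 0 := fun hF ↦ f_ne_zero <| by
        ext v
        exact congr($hF v)
      have F_surjective : Function.Surjective F :=
        (Representation.IsIrreducible.surjective_or_eq_zero F).resolve_right F_ne_zero
      have : Epi ((forget₂ (FDRep k G) (Rep k G)).map f) :=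
        (Rep.epi_iff_surjective _).mpr F_surjective
      have : Epi f := (forget₂ (FDRep k G) (Rep k G)).epi_of_epi_map this
      exact isIso_of_mono_of_epi f

theorem smul_eq_zero_of_isSimpleModule {G : Type v} [Monoid G] {a : k[G]}
    (ha : ∀ V : FDRep k G, Simple V → Representation.asAlgebraHom V.ρ a = 0)
    (M : Type u) [AddCommGroup M] [Module k M] [Module.Finite k M] [Module k[G] M]
    [IsScalarTower k k[G] M] [IsSimpleModule k[G] M] (m : M) : a • m = 0 := by
  let ρ : Representation k G M := Representation.ofModule' M
  have asAlgebraHom_apply (b : k[G]) (x : M) : ρ.asAlgebraHom b x = b • x :=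
    congr($((MonoidAlgebra.lift k _ G).apply_symm_apply (Algebra.lsmul k k M)) b x)
  let e : ρ.asModule ≃ₗ[k[G]] M :=
    { ρ.asModuleEquiv with
      map_smul' := fun b x ↦ (ρ.asModuleEquiv_map_smul b x).trans (asAlgebraHom_apply b _) }
  have : ρ.IsIrreducible :=
    ρ.irreducible_iff_isSimpleModule_asModule.mpr (IsSimpleModule.congr e)
  rw [← asAlgebraHom_apply]
  exact congr($(ha (FDRep.of ρ) (simple_of_isIrreducible ρ)) m)

theorem eq_zero_of_forall_simple {G : Type u} [Group G] [Finite G] [NeZero (Nat.card G : k)]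
    {a : k[G]} (ha : ∀ V : FDRep k G, Simple V → Representation.asAlgebraHom V.ρ a = 0) :
    a = 0 := by
  have mem_jacobson : a ∈ Ring.jacobson k[G] := by
    refine Submodule.mem_sInf.mpr fun m (hm : IsCoatom m) ↦ ?_
    have : IsSimpleModule k[G] (k[G] ⧸ m) := isSimpleModule_iff_isCoatom.mpr hm
    rw [← Submodule.Quotient.mk_eq_zero, ← mul_one a, ← smul_eq_mul, Submodule.Quotient.mk_smul]
    exact smul_eq_zero_of_isSimpleModule ha _ _
  rwa [IsSemisimpleRing.jacobson_eq_bot] at mem_jacobson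

end Faithfulness

section ClassSum

/-- The element `∑ g, f g • g` of the monoid algebra of a finite monoid. -/
def ofFun {k G : Type*} [Semiring k] [Finite G] (f : G → k) : k[G] :=
  ofCoeff (Finsupp.equivFunOnFinite.symm f)

theorem coeff_ofFun {k G : Type*} [Semiring k] [Finite G] (f : G → k) (g : G) :
    (ofFun f).coeff g = f g := rfl

theorem coeff_mul_eq_sum {k G : Type*} [Semiring k] [Group G] [Fintype G] (a b : k[G]) (g : G) :
    (a * b).coeff g = ∑ x, a.coeff x * b.coeff (x⁻¹ * g) := by
  rw [coeff_mul_apply_left, Finsupp.sum_fintype _ _ fun x ↦ zero_mul _]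

theorem mem_center_of_coeff_conj_eq {k G : Type*} [CommSemiring k] [Group G] {a : k[G]}
    (ha : ∀ g h, a.coeff (h * g * h⁻¹) = a.coeff g) : a ∈ Subalgebra.center k k[G] := by
  refine Subalgebra.mem_center_iff.mpr fun b ↦ ?_
  induction b using MonoidAlgebra.induction_linear with
  | zero => rw [zero_mul, mul_zero]
  | add b c hb hc => rw [add_mul, mul_add, hb, hc]
  | single h r =>
    ext g
    rw [coeff_single_mul_apply, coeff_mul_single_apply, mul_comm, ← ha (h⁻¹ * g) h,
      mul_inv_cancel_left]

/-- The sum, in the group algebra, of the elements of a conjugacy class. -/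
def classSum (k : Type*) {G : Type*} [Semiring k] [Group G] [Finite G] (α : ConjClasses G) :
    k[G] :=
  ofFun (α.carrier.indicator 1)

variable {k G : Type*} [CommSemiring k] [Group G] [Finite G]

theorem classSum_mem_center (α : ConjClasses G) : classSum k α ∈ Subalgebra.center k k[G] := by
  classical
  refine mem_center_of_coeff_conj_eq fun g h ↦ ?_
  have isConj_conj : IsConj g (h * g * h⁻¹) := isConj_iff.mpr ⟨h, rfl⟩
  have conj_mem_iff : h * g * h⁻¹ ∈ α.carrier ↔ g ∈ α.carrier := by
    simp only [ConjClasses.mem_carrier_iff_mk_eq, ConjClasses.mk_eq_mk_iff_isConj.mpr isConj_conj]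
  simp only [classSum, coeff_ofFun, Set.indicator_apply, conj_mem_iff, Pi.one_apply]

theorem coeff_one_classSum_mul_classSum_mul_classSum (α β γ : ConjClasses G) :
    (classSum k α * classSum k β * classSum k γ).coeff 1 = (Nat.card
      {p : G × G // p.1 ∈ α.carrier ∧ p.2 ∈ β.carrier ∧ (p.1 * p.2)⁻¹ ∈ γ.carrier} : k) := by
  classical
  have := Fintype.ofFinite G
  have coeff_eq : (classSum k α * classSum k β * classSum k γ).coeff 1 = ∑ x : G, ∑ y : G,
      α.carrier.indicator 1 x * β.carrier.indicator 1 y * γ.carrier.indicator 1 (x * y)⁻¹ := by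
    simp_rw [mul_assoc, coeff_mul_eq_sum, Finset.mul_sum, classSum, coeff_ofFun, mul_one,
      mul_inv_rev]
  rw [coeff_eq, ← Fintype.sum_prod_type', Nat.card_eq_fintype_card, Fintype.card_subtype,
    Finset.card_filter, Nat.cast_sum]
  refine Finset.sum_congr rfl fun p _ ↦ ?_
  by_cases hx : p.1 ∈ α.carrier <;> by_cases hy : p.2 ∈ β.carrier <;>
    simp [hx, hy, Set.indicator_apply]

end ClassSum

section CentralCharacter

variable {k : Type u} {G : Type v} [Field k] [Monoid G]

/-- The `k`-linear extension of the character of `V` to the monoid algebra. -/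
def charMap (V : FDRep k G) : k[G] →ₗ[k] k :=
  LinearMap.trace k V ∘ₗ (Representation.asAlgebraHom V.ρ).toLinearMap

theorem charMap_single (V : FDRep k G) (g : G) (r : k) :
    charMap V (single g r) = r * V.character g := by
  simp [charMap, FDRep.character]

theorem charMap_eq_sum [Fintype G] (V : FDRep k G) (a : k[G]) :
    charMap V a = ∑ g, a.coeff g * V.character g := by
  nth_rw 1 [← sum_coeff_single a, Finsupp.sum_fintype _ _ fun g ↦ single_zero g, map_sum]
  simp_rw [charMap_single]

variable [IsAlgClosed k] (V : FDRep k G) [Simple V]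

theorem finrank_smul_eq_trace_smul_one {A : Module.End k V} (hA : ∀ g, Commute A (V.ρ g)) :
    (Module.finrank k V : k) • A = LinearMap.trace k V A • 1 := by
  let f : V ⟶ V := ⟨FGModuleCat.ofHom A, fun g ↦ by ext v; exact congr($(hA g) v)⟩
  obtain ⟨c, hc⟩ := endomorphism_simple_eq_smul_id k f
  have A_eq : A = c • 1 := congr($(hc).hom.hom.hom).symm
  rw [A_eq, map_smul, LinearMap.trace_one, smul_smul, smul_eq_mul, mul_comm]

variable {z : k[G]} (hz : z ∈ Subalgebra.center k k[G])

include hz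

theorem finrank_smul_asAlgebraHom :
    (Module.finrank k V : k) • Representation.asAlgebraHom V.ρ z = charMap V z • 1 := by
  refine finrank_smul_eq_trace_smul_one V fun g ↦ ?_
  rw [← Representation.asAlgebraHom_single_one V.ρ g]
  exact Commute.map (Subalgebra.mem_center_iff.mp hz _).symm (Representation.asAlgebraHom V.ρ)

theorem finrank_mul_charMap_mul (a : k[G]) :
    Module.finrank k V * charMap V (z * a) = charMap V z * charMap V a :=
  calc Module.finrank k V * charMap V (z * a)
      = LinearMap.trace k V (((Module.finrank k V : k) • Representation.asAlgebraHom V.ρ z) *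
          Representation.asAlgebraHom V.ρ a) := by simp [charMap]
    _ = charMap V z * charMap V a := by simp [finrank_smul_asAlgebraHom V hz, charMap]

theorem finrank_sq_mul_charMap_mul_mul {w : k[G]} (hw : w ∈ Subalgebra.center k k[G]) (a : k[G]) :
    (Module.finrank k V : k) ^ 2 * charMap V (z * w * a) =
      charMap V z * charMap V w * charMap V a := by
  rw [sq, mul_assoc, mul_assoc z, finrank_mul_charMap_mul V hz, mul_left_comm,
    finrank_mul_charMap_mul V hw, mul_assoc]

end CentralCharacter

section CharElement

variable {k : Type u} {G : Type v} [Field k] [Group G] [Finite G]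

theorem charMap_classSum (V : FDRep k G) (α : ConjClasses G) :
    charMap V (classSum k α) = ∑ x ∈ (Set.toFinite α.carrier).toFinset, V.character x := by
  classical
  have := Fintype.ofFinite G
  simp only [charMap_eq_sum, classSum, coeff_ofFun, Set.indicator_apply, Pi.one_apply, ite_mul,
    one_mul, zero_mul, ← Finset.sum_filter]
  exact Finset.sum_congr (by ext; simp) fun _ _ ↦ rfl

/-- The element `∑ g, χ(g⁻¹) • g` of the group algebra, where `χ` is the character of `V`. For
simple `V` of dimension `d` it is `|G| / d` times the central idempotent that belongs to `V`; the
factor is left out so that no division is needed. -/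
def charElement (V : FDRep k G) : k[G] := ofFun fun g ↦ V.character g⁻¹

theorem charElement_mem_center (V : FDRep k G) : charElement V ∈ Subalgebra.center k k[G] :=
  mem_center_of_coeff_conj_eq fun g h ↦ by
    simp only [charElement, coeff_ofFun, conj_inv, FDRep.char_conj]

theorem coeff_one_mul_charElement (V : FDRep k G) (a : k[G]) :
    (a * charElement V).coeff 1 = charMap V a := by
  have := Fintype.ofFinite G
  simp only [coeff_mul_eq_sum, charElement, coeff_ofFun, mul_one, inv_inv, charMap_eq_sum]

variable [IsAlgClosed k] [NeZero (Nat.card G : k)]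

open scoped Classical in
theorem charMap_charElement (V W : FDRep k G) [Simple V] [Simple W] :
    charMap V (charElement W) = if Nonempty (V ≅ W) then (Nat.card G : k) else 0 := by
  have := Fintype.ofFinite G
  have := invertibleOfNonzero (NeZero.ne (Nat.card G : k))
  have orthogonality := FDRep.char_orthonormal V W
  rw [inv_mul_eq_iff_eq_mul₀ (NeZero.ne _)] at orthogonality
  rw [charMap_eq_sum]
  simp_rw [charElement, coeff_ofFun, mul_comm, orthogonality, mul_ite, mul_one, mul_zero]

theorem cast_finrank_ne_zero (V : FDRep k G) [Simple V] : (Module.finrank k V : k) ≠ 0 := by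
  have h := finrank_mul_charMap_mul V (charElement_mem_center V) (charElement V)
  rw [charMap_charElement, if_pos ⟨Iso.refl V⟩] at h
  exact left_ne_zero_of_mul (h.trans_ne (mul_ne_zero (NeZero.ne _) (NeZero.ne _)))

variable {V W : FDRep k G} [Simple V] [Simple W]

theorem finrank_smul_asAlgebraHom_charElement (e : V ≅ W) :
    (Module.finrank k W : k) • Representation.asAlgebraHom V.ρ (charElement W) =
      (Nat.card G : k) • 1 := by
  have finrank_eq : (Module.finrank k W : k) = Module.finrank k V := by
    rw [← FDRep.char_one, ← FDRep.char_iso e, FDRep.char_one]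
  rw [finrank_eq, finrank_smul_asAlgebraHom V (charElement_mem_center W), charMap_charElement,
    if_pos ⟨e⟩]

theorem asAlgebraHom_charElement_eq_zero (hVW : IsEmpty (V ≅ W)) :
    Representation.asAlgebraHom V.ρ (charElement W) = 0 := by
  have h := finrank_smul_asAlgebraHom V (charElement_mem_center W)
  rw [charMap_charElement, if_neg (not_nonempty_iff.mpr hVW), zero_smul] at h
  exact (smul_eq_zero.mp h).resolve_left (cast_finrank_ne_zero V)

end CharElement

section CompleteFamily

variable {k G : Type u} [Field k] [IsAlgClosed k] [Group G] [Finite G] [NeZero (Nat.card G : k)]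
  {ι : Type*} [Fintype ι] (W : ι → FDRep k G) (hsimple : ∀ i, Simple (W i))
  (hdistinct : ∀ i j, i ≠ j → IsEmpty (W i ≅ W j))
  (hcomplete : ∀ V : FDRep k G, Simple V → ∃ i, Nonempty (V ≅ W i))

include hsimple hdistinct hcomplete

theorem card_smul_one_eq_sum_finrank_smul_charElement :
    (Nat.card G : k) • (1 : k[G]) = ∑ i, (Module.finrank k (W i) : k) • charElement (W i) := by
  refine sub_eq_zero.mp (eq_zero_of_forall_simple fun V _ ↦ ?_)
  obtain ⟨i, ⟨e⟩⟩ := hcomplete V ‹_›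
  have sum_eq : ∑ j, (Module.finrank k (W j) : k) •
      Representation.asAlgebraHom V.ρ (charElement (W j)) = (Nat.card G : k) • 1 := by
    rw [Finset.sum_eq_single_of_mem i (Finset.mem_univ i) fun j _ hj ↦ ?_,
      finrank_smul_asAlgebraHom_charElement e]
    have isEmpty_iso : IsEmpty (V ≅ W j) := ⟨fun e' ↦ (hdistinct j i hj).false (e'.symm ≪≫ e)⟩
    rw [asAlgebraHom_charElement_eq_zero isEmpty_iso, smul_zero]
  simp only [map_sub, map_smul, map_one, map_sum, sum_eq, sub_self]

theorem card_mul_coeff_one_eq_sum_finrank_mul_charMap (a : k[G]) :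
    Nat.card G * a.coeff 1 = ∑ i, Module.finrank k (W i) * charMap (W i) a := by
  have h := congr((a *
    $(card_smul_one_eq_sum_finrank_smul_charElement W hsimple hdistinct hcomplete)).coeff 1)
  simpa only [mul_smul_comm, mul_one, Finset.mul_sum, coeff_sum, coeff_smul, Finsupp.smul_apply,
    Finsupp.finsetSum_apply, coeff_one_mul_charElement, smul_eq_mul] using h

end CompleteFamily

theorem chC_mul_chC_mul_chC {G : Type} [Group G] [Fintype G] (V : FDRep ℂ G)
    (α β γ : ConjClasses G) :
    chC V α * chC V β * chC V γ =
      (∑ x ∈ (Set.toFinite α.carrier).toFinset, V.character x) *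
        (∑ x ∈ (Set.toFinite β.carrier).toFinset, V.character x) *
        (∑ x ∈ (Set.toFinite γ.carrier).toFinset, V.character x) /
      (Real.sqrt ((Nat.card α.carrier : ℝ) * (Nat.card β.carrier) * (Nat.card γ.carrier)) : ℂ) := by
  rw [Real.sqrt_mul (by positivity), Real.sqrt_mul (by positivity)]
  push_cast
  simp only [chC]
  ring

end FrobeniusFormula

open FrobeniusFormula in
theorem stmt14_general {k G : Type u} [Field k] [IsAlgClosed k] [Group G] [Finite G]
    [NeZero (Nat.card G : k)] {ι : Type*} [Fintype ι] (W : ι → FDRep k G)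
    (hsimple : ∀ i, Simple (W i))
    (hdistinct : ∀ i j, i ≠ j → IsEmpty (W i ≅ W j))
    (hcomplete : ∀ V : FDRep k G, Simple V → ∃ i, Nonempty (V ≅ W i)) (α β γ : ConjClasses G) :
    (Nat.card {p : G × G // p.1 ∈ α.carrier ∧ p.2 ∈ β.carrier ∧ (p.1 * p.2)⁻¹ ∈ γ.carrier} : k) *
        Nat.card G =
      ∑ i, (∑ x ∈ (Set.toFinite α.carrier).toFinset, (W i).character x) *
        (∑ x ∈ (Set.toFinite β.carrier).toFinset, (W i).character x) *
        (∑ x ∈ (Set.toFinite γ.carrier).toFinset, (W i).character x) / Module.finrank k (W i) := by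
  rw [← coeff_one_classSum_mul_classSum_mul_classSum, mul_comm,
    card_mul_coeff_one_eq_sum_finrank_mul_charMap W hsimple hdistinct hcomplete]
  refine Finset.sum_congr rfl fun i _ ↦ ?_
  have := hsimple i
  simp_rw [← charMap_classSum]
  rw [eq_div_iff (cast_finrank_ne_zero (W i)), mul_right_comm, ← sq,
    finrank_sq_mul_charMap_mul_mul _ (classSum_mem_center α) (classSum_mem_center β)]

/-- for a complete family `W i` of pairwise non-isomorphic irreducible
representations of a finite group G, the three-point function of the lattice TFT for
ℂ[G], `N_{αβγ} = #{(x,y)∈α×β : xy ∈ γ̂} · |G| / √(h_α h_β h_γ)`, equals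
`∑_j χ_j(C_α) χ_j(C_β) χ_j(C_γ) / d_j`. -/
theorem stmt14 {G : Type} [Group G] [Fintype G] [DecidableEq G]
    {ι : Type} [Fintype ι] (W : ι → FDRep ℂ G)
    (hsimple : ∀ i, Simple (W i))
    (hdistinct : ∀ i j, i ≠ j → IsEmpty (W i ≅ W j))
    (hcomplete : ∀ V : FDRep ℂ G, Simple V → ∃ i, Nonempty (V ≅ W i)) :
    ∀ α β γ : ConjClasses G,
      ((Nat.card {p : G × G // p.1 ∈ α.carrier ∧ p.2 ∈ β.carrier ∧ (p.1 * p.2)⁻¹ ∈ γ.carrier}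
          : ℕ) : ℂ) * (Fintype.card G : ℂ) /
          (Real.sqrt ((Nat.card α.carrier : ℝ) * (Nat.card β.carrier) * (Nat.card γ.carrier))
            : ℂ) =
        ∑ i, chC (W i) α * chC (W i) β * chC (W i) γ / (Module.finrank ℂ (W i) : ℂ) := by
  intro α β γ
  simp_rw [FrobeniusFormula.chC_mul_chC_mul_chC, div_right_comm, ← Finset.sum_div]
  rw [← Nat.card_eq_fintype_card, stmt14_general W hsimple hdistinct hcomplete]

end
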